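/- Let Γ be a Hankel operator on ℓ²(ℕ, ℂ), H := Γ∘C the associated anti-linear Hankel operator, H̃ := H∘S, and u := He₀ its symbol. Let K denote the closed linear span of {(H²)ⁿ u : n ≥ 0}. Assume that H maps K into K and that H̃ maps K into K. Then K equals the closure of the range of H; in particular, the closed linear span of {(H²)ⁿ u : n ≥ 0} and the closed linear span of {(H̃²)ⁿ u : n ≥ 0} both equal closure(Ran H), so the restrictions of H² and H̃² to closure(Ran H) have u as a common cyclic vector (i.e. they have simple spectrum). -/

import Mathlib

open scoped ComplexConjugate InnerProductSpace

/-!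
Let `M` be the closed cyclic subspace of `u = H e₀`. A symmetric anti-linear `H` is injective on
`closure (Ran H)`, because its kernel is `(Ran H)ᗮ`; as `M ⊆ closure (Ran H)` is invariant
under `H`, a vector of `M` orthogonal to `H M` is killed by `H`, so `H M` is dense in `M`.
The intertwining relation `S* H = H S` shows `S* (H M) ⊆ M`, and by density `S* M ⊆ M`. Hence
`M` contains every `S*ⁿ u = H Sⁿ e₀`, and these span a dense subspace of `Ran H`.

The symmetry of `H` comes from `e₀` being cyclic for `S`: the expression
`⟪H Sᵐ e₀, Sⁿ e₀⟫ = ⟪u, Sᵐ⁺ⁿ e₀⟫` is symmetric in `m` and `n`. The cyclic subspaces of `u`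
under `H²` and `H̃²`, where `H̃ = H S`, agree since `S S* = 1 - ⟪e₀, ·⟫ e₀` makes `H̃² - H²`
take values in the line of `u`.
-/

section CyclicSubspace

section Semiring

variable {R M : Type*} [Semiring R] [AddCommMonoid M] [Module R M]

/-- The cyclic subspace of `x` under `T`: the span of the orbit `x, T x, T² x, …`, with no
closure taken. -/
def cyclicSubspace (T : M →ₗ[R] M) (x : M) : Submodule R M :=
  Submodule.span R (Set.range fun n : ℕ => T^[n] x)

theorem self_mem_cyclicSubspace (T : M →ₗ[R] M) (x : M) : x ∈ cyclicSubspace T x :=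
  Submodule.subset_span ⟨0, rfl⟩

theorem cyclicSubspace_le {T : M →ₗ[R] M} {x : M} {N : Submodule R M} (hx : x ∈ N)
    (hT : ∀ y ∈ N, T y ∈ N) : cyclicSubspace T x ≤ N :=
  Submodule.span_le.2 <| Set.range_subset_iff.2 fun n =>
    (show Set.MapsTo T N N from hT).iterate n hx

theorem map_mem_cyclicSubspace {T : M →ₗ[R] M} {x y : M} (hy : y ∈ cyclicSubspace T x) :
    T y ∈ cyclicSubspace T x := by
  suffices cyclicSubspace T x ≤ (cyclicSubspace T x).comap T from this hy
  refine Submodule.span_le.2 (Set.range_subset_iff.2 fun n => ?_)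
  exact Submodule.subset_span ⟨n + 1, Function.iterate_succ_apply' T n x⟩

end Semiring

section Ring

variable {R M : Type*} [Ring R] [AddCommGroup M] [Module R M]

theorem cyclicSubspace_le_of_sub_mem_span_singleton {T T' : M →ₗ[R] M} {x : M}
    (h : ∀ y, T' y - T y ∈ Submodule.span R {x}) :
    cyclicSubspace T' x ≤ cyclicSubspace T x := by
  have span_le : Submodule.span R {x} ≤ cyclicSubspace T x := by
    simpa using self_mem_cyclicSubspace T x
  refine cyclicSubspace_le (self_mem_cyclicSubspace T x) fun y hy => ?_
  rw [← sub_add_cancel (T' y) (T y)]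
  exact add_mem (span_le (h y)) (map_mem_cyclicSubspace hy)

theorem cyclicSubspace_eq_of_sub_mem_span_singleton {T T' : M →ₗ[R] M} {x : M}
    (h : ∀ y, T' y - T y ∈ Submodule.span R {x}) :
    cyclicSubspace T' x = cyclicSubspace T x :=
  le_antisymm (cyclicSubspace_le_of_sub_mem_span_singleton h) <|
    cyclicSubspace_le_of_sub_mem_span_singleton fun y => sub_mem_comm_iff.1 (h y)

end Ring

end CyclicSubspace

section ConjSymmetric

variable {𝕜 E : Type*} [RCLike 𝕜] [NormedAddCommGroup E] [InnerProductSpace 𝕜 E]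

/-- Symmetry of an anti-linear operator. Both sides are linear in `f` and in `g`, so this is the
anti-linear counterpart of self-adjointness. -/
def IsConjSymmetric (H : E →L⋆[𝕜] E) : Prop :=
  ∀ f g, ⟪H f, g⟫_𝕜 = ⟪H g, f⟫_𝕜

variable {H : E →L⋆[𝕜] E}

theorem IsConjSymmetric.orthogonal_range (hH : IsConjSymmetric H) : H.rangeᗮ = H.ker := by
  ext z
  simp only [Submodule.mem_orthogonal, LinearMap.mem_range, forall_exists_index,
    forall_apply_eq_imp_iff, LinearMap.mem_ker, ContinuousLinearMap.coe_coe, hH _ z]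
  exact ⟨fun h => inner_self_eq_zero.1 (h (H z)), fun h f => by rw [h, inner_zero_left]⟩

theorem IsConjSymmetric.topologicalClosure_range_inf_ker (hH : IsConjSymmetric H) :
    H.range.topologicalClosure ⊓ H.ker = ⊥ := by
  rw [← hH.orthogonal_range, ← Submodule.orthogonal_closure]
  exact Submodule.inf_orthogonal_eq_bot _

theorem IsConjSymmetric.orthogonal_map_inf_le_ker (hH : IsConjSymmetric H)
    {M : Submodule 𝕜 E} (hHM : ∀ x ∈ M, H x ∈ M) : (M.map H.toLinearMap)ᗮ ⊓ M ≤ H.ker := by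
  rintro z ⟨hz, hzM⟩
  have : ⟪H z, H z⟫_𝕜 = 0 := by
    rw [hH z (H z)]
    exact hz _ (Submodule.mem_map_of_mem (hHM z hzM))
  exact inner_self_eq_zero.1 this

theorem IsConjSymmetric.topologicalClosure_map_eq [CompleteSpace E] (hH : IsConjSymmetric H)
    {M : Submodule 𝕜 E} (hM : IsClosed (M : Set E)) (hMr : M ≤ H.range.topologicalClosure)
    (hHM : ∀ x ∈ M, H x ∈ M) : (M.map H.toLinearMap).topologicalClosure = M := by
  have closure_le : (M.map H.toLinearMap).topologicalClosure ≤ M :=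
    Submodule.topologicalClosure_minimal _ (Submodule.map_le_iff_le_comap.2 hHM) hM
  have orthogonal_inf : (M.map H.toLinearMap)ᗮ ⊓ M = ⊥ :=
    eq_bot_iff.2 <| hH.topologicalClosure_range_inf_ker ▸
      le_inf (inf_le_right.trans hMr) (hH.orthogonal_map_inf_le_ker hHM)
  have : CompleteSpace (M.map H.toLinearMap).topologicalClosure :=
    (Submodule.isClosed_topologicalClosure _).completeSpace_coe
  simpa only [Submodule.orthogonal_closure, orthogonal_inf, sup_bot_eq] using
    Submodule.sup_orthogonal_inf_of_hasOrthogonalProjection closure_le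

end ConjSymmetric

section AbstractHankel

open ContinuousLinearMap (adjoint)

variable {𝕜 E : Type*} [RCLike 𝕜] [NormedAddCommGroup E] [InnerProductSpace 𝕜 E] [CompleteSpace E]
  {S : E →L[𝕜] E} {H : E →L⋆[𝕜] E} {e : E}

theorem inner_map_iterate_iterate (hHS : Function.Semiconj H S (adjoint S)) (m n : ℕ)
    (x y : E) : ⟪H (S^[m] x), S^[n] y⟫_𝕜 = ⟪H x, S^[m + n] y⟫_𝕜 := by
  induction m generalizing n with
  | zero => rw [zero_add, Function.iterate_zero_apply]
  | succ m ih =>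
    rw [Function.iterate_succ_apply', hHS.eq, ContinuousLinearMap.adjoint_inner_left,
      ← Function.iterate_succ_apply' (f := S), ih, Nat.succ_add_eq_add_succ]

theorem isConjSymmetric_of_semiconj_adjoint (hHS : Function.Semiconj H S (adjoint S))
    (he : Dense (cyclicSubspace S.toLinearMap e : Set E)) : IsConjSymmetric H := by
  let B : E →L[𝕜] E →L[𝕜] 𝕜 := (innerSL 𝕜).comp H
  suffices B = B.flip from fun f g => DFunLike.congr_fun (DFunLike.congr_fun this f) g
  refine ContinuousLinearMap.ext_on he ?_
  rintro _ ⟨m, rfl⟩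
  refine ContinuousLinearMap.ext_on he ?_
  rintro _ ⟨n, rfl⟩
  change ⟪H (S^[m] e), S^[n] e⟫_𝕜 = ⟪H (S^[n] e), S^[m] e⟫_𝕜
  rw [inner_map_iterate_iterate hHS, inner_map_iterate_iterate hHS, add_comm]

theorem range_le_of_adjoint_invariant (hHS : Function.Semiconj H S (adjoint S))
    (he : Dense (cyclicSubspace S.toLinearMap e : Set E)) {M : Submodule 𝕜 E}
    (hM : IsClosed (M : Set E)) (heM : H e ∈ M) (hSM : ∀ x ∈ M, adjoint S x ∈ M) :
    H.range ≤ M := by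
  have cyclic_le : cyclicSubspace S.toLinearMap e ≤ M.comap H.toLinearMap :=
    cyclicSubspace_le heM fun x hx => by
      simpa only [Submodule.mem_comap, ContinuousLinearMap.coe_coe, hHS.eq] using hSM _ hx
  rintro _ ⟨x, rfl⟩
  exact closure_minimal cyclic_le (hM.preimage H.continuous) (he x)

theorem adjoint_invariant_of_map_dense (hHS : Function.Semiconj H S (adjoint S))
    {M : Submodule 𝕜 E} (hM : IsClosed (M : Set E))
    (hdense : M ≤ (M.map H.toLinearMap).topologicalClosure)
    (hHSM : ∀ x ∈ M, H (S x) ∈ M) : ∀ x ∈ M, adjoint S x ∈ M := by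
  have map_le : M.map H.toLinearMap ≤ M.comap (adjoint S).toLinearMap := by
    rintro _ ⟨x, hx, rfl⟩
    simpa only [Submodule.mem_comap, ContinuousLinearMap.coe_coe, hHS.eq] using hHSM x hx
  have closure_le := Submodule.topologicalClosure_minimal _ map_le
    (hM.preimage (adjoint S).continuous)
  exact fun x hx => closure_le (hdense hx)

theorem eq_topologicalClosure_range_of_invariant (hHS : Function.Semiconj H S (adjoint S))
    (he : Dense (cyclicSubspace S.toLinearMap e : Set E)) {M : Submodule 𝕜 E}
    (hM : IsClosed (M : Set E)) (hMr : M ≤ H.range.topologicalClosure) (heM : H e ∈ M)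
    (hHM : ∀ x ∈ M, H x ∈ M) (hHSM : ∀ x ∈ M, H (S x) ∈ M) :
    M = H.range.topologicalClosure := by
  have map_dense : (M.map H.toLinearMap).topologicalClosure = M :=
    (isConjSymmetric_of_semiconj_adjoint hHS he).topologicalClosure_map_eq hM hMr hHM
  have adjoint_invariant := adjoint_invariant_of_map_dense hHS hM map_dense.ge hHSM
  exact le_antisymm hMr <| Submodule.topologicalClosure_minimal _
    (range_le_of_adjoint_invariant hHS he hM heM adjoint_invariant) hM

theorem comp_sq_sub_sq_mem_span_singleton (hHS : Function.Semiconj H S (adjoint S))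
    (hS : ∀ y, S (adjoint S y) = y - ⟪e, y⟫_𝕜 • e) (x : E) :
    H (S (H (S x))) - H (H x) ∈ Submodule.span 𝕜 {H e} := by
  have : H (S (H (S x))) - H (H x) = -(conj ⟪e, H x⟫_𝕜 • H e) := by
    rw [hHS.eq x, hS, map_sub, map_smulₛₗ, sub_sub_cancel_left]
  rw [this]
  exact neg_mem (Submodule.smul_mem _ _ (Submodule.mem_span_singleton_self _))

theorem simple_spectrum_of_invariant_cyclic_subspace_general
    (hHS : Function.Semiconj H S (adjoint S))
    (he : Dense (cyclicSubspace S.toLinearMap e : Set E))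
    (hS : ∀ y, S (adjoint S y) = y - ⟪e, y⟫_𝕜 • e)
    {K : Submodule 𝕜 E}
    (hK : K = (cyclicSubspace (H.comp H : E →L[𝕜] E).toLinearMap (H e)).topologicalClosure)
    (hHK : ∀ x ∈ K, H x ∈ K) (hHSK : ∀ x ∈ K, H (S x) ∈ K) :
    K = H.range.topologicalClosure ∧
    (cyclicSubspace ((H.comp S).comp (H.comp S) : E →L[𝕜] E).toLinearMap
      (H e)).topologicalClosure = H.range.topologicalClosure := by
  have cyclic_le : cyclicSubspace (H.comp H : E →L[𝕜] E).toLinearMap (H e) ≤ H.range :=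
    cyclicSubspace_le ⟨e, rfl⟩ fun x _ => ⟨H x, rfl⟩
  have K_eq : K = H.range.topologicalClosure := by
    refine eq_topologicalClosure_range_of_invariant hHS he ?_ ?_ ?_ hHK hHSK <;> rw [hK]
    · exact Submodule.isClosed_topologicalClosure _
    · exact Submodule.topologicalClosure_mono cyclic_le
    · exact Submodule.le_topologicalClosure _ (self_mem_cyclicSubspace _ _)
  refine ⟨K_eq, ?_⟩
  rw [← K_eq, hK]
  exact congrArg Submodule.topologicalClosure <|
    cyclicSubspace_eq_of_sub_mem_span_singleton (comp_sq_sub_sq_mem_span_singleton hHS hS)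

end AbstractHankel

section UnilateralShift

open ContinuousLinearMap (adjoint)
open scoped lp

variable {𝕜 : Type*} [RCLike 𝕜]

theorem inner_lp_single_one_left {ι : Type*} [DecidableEq ι] (i : ι) (x : ℓ²(ι, 𝕜)) :
    ⟪(lp.single 2 i (1 : 𝕜) : ℓ²(ι, 𝕜)), x⟫_𝕜 = x i := by
  simp [lp.inner_single_left]

theorem dense_span_range_lp_single {ι : Type*} [DecidableEq ι] :
    Dense (Submodule.span 𝕜 (Set.range fun i : ι => (lp.single 2 i 1 : ℓ²(ι, 𝕜))) :
      Set ℓ²(ι, 𝕜)) := by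
  let b : HilbertBasis ι 𝕜 ℓ²(ι, 𝕜) := ⟨LinearIsometryEquiv.refl 𝕜 _⟩
  have coe_b : ⇑b = fun i => lp.single 2 i 1 := funext b.repr_self
  rw [Submodule.dense_iff_topologicalClosure_eq_top, ← coe_b, b.dense_span]

theorem eq_lp_single_one {ι : Type*} [DecidableEq ι] {i : ι} {x : ℓ²(ι, 𝕜)} (hi : x i = 1)
    (hne : ∀ j, j ≠ i → x j = 0) : x = lp.single 2 i 1 := by
  ext j
  obtain rfl | hj := eq_or_ne j i
  · simp [hi]
  · simp [hne j hj, hj]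

/-- `S` is the forward shift of `ℓ²(ℕ, 𝕜)`, characterised by its coordinates. -/
structure IsUnilateralShift (S : ℓ²(ℕ, 𝕜) →L[𝕜] ℓ²(ℕ, 𝕜)) : Prop where
  apply_zero : ∀ x, S x 0 = 0
  apply_succ : ∀ x n, S x (n + 1) = x n

namespace IsUnilateralShift

variable {S : ℓ²(ℕ, 𝕜) →L[𝕜] ℓ²(ℕ, 𝕜)}

theorem map_single (hS : IsUnilateralShift S) (n : ℕ) (a : 𝕜) :
    S (lp.single 2 n a) = lp.single 2 (n + 1) a := by
  ext k
  cases k with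
  | zero => simp [hS.apply_zero, lp.single_apply]
  | succ k => simp [hS.apply_succ, lp.single_apply, Pi.single_apply]

theorem iterate_single_zero (hS : IsUnilateralShift S) (n : ℕ) (a : 𝕜) :
    S^[n] (lp.single 2 0 a) = lp.single 2 n a := by
  induction n with
  | zero => rfl
  | succ n ih => rw [Function.iterate_succ_apply', ih, hS.map_single]

theorem dense_cyclicSubspace (hS : IsUnilateralShift S) :
    Dense (cyclicSubspace S.toLinearMap (lp.single 2 0 1) : Set ℓ²(ℕ, 𝕜)) := by
  simpa only [cyclicSubspace, ContinuousLinearMap.coe_coe, hS.iterate_single_zero] using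
    dense_span_range_lp_single

theorem adjoint_apply (hS : IsUnilateralShift S) (x : ℓ²(ℕ, 𝕜)) (n : ℕ) :
    adjoint S x n = x (n + 1) := by
  rw [← inner_lp_single_one_left, ContinuousLinearMap.adjoint_inner_right, hS.map_single,
    inner_lp_single_one_left]

theorem eq_adjoint (hS : IsUnilateralShift S) {T : ℓ²(ℕ, 𝕜) →L[𝕜] ℓ²(ℕ, 𝕜)}
    (hT : ∀ x n, T x n = x (n + 1)) : T = adjoint S := by
  ext x n
  rw [hT, hS.adjoint_apply]

theorem map_adjoint (hS : IsUnilateralShift S) (y : ℓ²(ℕ, 𝕜)) :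
    S (adjoint S y) = y - ⟪lp.single 2 0 1, y⟫_𝕜 • lp.single 2 0 1 := by
  ext k
  rw [← inner_lp_single_one_left k (y - _), inner_sub_right, inner_smul_right]
  cases k with
  | zero => simp [hS.apply_zero, inner_lp_single_one_left]
  | succ k => simp [hS.apply_succ, hS.adjoint_apply, inner_lp_single_one_left]

theorem map_star (hS : IsUnilateralShift S) (x : ℓ²(ℕ, 𝕜)) :
    S (star x) = star (S x) := by
  ext k
  cases k with
  | zero => simp [hS.apply_zero]
  | succ k => simp [hS.apply_succ]

end IsUnilateralShift

/-- The anti-linear operator `Γ ∘ C`, the conjugation `C` being the pointwise `star` of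
`ℓ²(ℕ, 𝕜)`. For a Hankel operator `Γ` it is the associated anti-linear Hankel operator. -/
noncomputable def compConj (Γ : ℓ²(ℕ, 𝕜) →L[𝕜] ℓ²(ℕ, 𝕜)) : ℓ²(ℕ, 𝕜) →L⋆[𝕜] ℓ²(ℕ, 𝕜) :=
  Γ.comp (starL 𝕜).toContinuousLinearMap

theorem IsUnilateralShift.semiconj_compConj {S Γ : ℓ²(ℕ, 𝕜) →L[𝕜] ℓ²(ℕ, 𝕜)}
    (hS : IsUnilateralShift S) (hΓ : Function.Semiconj Γ S (adjoint S)) :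
    Function.Semiconj (compConj Γ) S (adjoint S) := fun x => by
  change Γ (star (S x)) = adjoint S (Γ (star x))
  rw [← hS.map_star, hΓ.eq]

end UnilateralShift

/-- **Invariance of the cyclic subspace of the symbol forces simple spectrum.** For a
bounded Hankel operator `Γ` on `ℓ²(ℕ, ℂ)` with anti-linear Hankel operator `H = Γ∘C`,
truncation `H̃ = H∘S` and symbol `u = H e₀`, let `K` be the closed linear span of
`{(H²)ⁿ u : n ≥ 0}`. If `H(K) ⊆ K` and `H̃(K) ⊆ K`, then `K = closure (Ran H)`; in
particular the closed spans of `{(H²)ⁿ u}` and of `{(H̃²)ⁿ u}` both equal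
`closure (Ran H)`, so `u` is a common cyclic vector of the restrictions of `H²` and `H̃²`
to `closure (Ran H)`. -/
theorem simple_spectrum_of_invariant_cyclic_subspace
    (S Sstar Γ : lp (fun _ : ℕ => ℂ) 2 →L[ℂ] lp (fun _ : ℕ => ℂ) 2)
    (hS0 : ∀ x : lp (fun _ : ℕ => ℂ) 2, S x 0 = 0)
    (hSsucc : ∀ (x : lp (fun _ : ℕ => ℂ) 2) (n : ℕ), S x (n + 1) = x n)
    (hSstar : ∀ (x : lp (fun _ : ℕ => ℂ) 2) (n : ℕ), Sstar x n = x (n + 1))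
    (hHankel : ∀ x : lp (fun _ : ℕ => ℂ) 2, Γ (S x) = Sstar (Γ x))
    (C : lp (fun _ : ℕ => ℂ) 2 → lp (fun _ : ℕ => ℂ) 2)
    (hC : ∀ (x : lp (fun _ : ℕ => ℂ) 2) (n : ℕ), C x n = conj (x n))
    (H : lp (fun _ : ℕ => ℂ) 2 → lp (fun _ : ℕ => ℂ) 2)
    (hH : ∀ x, H x = Γ (C x))
    (e0 : lp (fun _ : ℕ => ℂ) 2) (he0 : e0 0 = 1) (he0' : ∀ n : ℕ, n ≠ 0 → e0 n = 0)
    (u : lp (fun _ : ℕ => ℂ) 2) (hu : u = H e0)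
    (K : Set (lp (fun _ : ℕ => ℂ) 2))
    (hK : K = closure ((Submodule.span ℂ
        (Set.range fun n : ℕ => (fun x => H (H x))^[n] u) :
          Submodule ℂ (lp (fun _ : ℕ => ℂ) 2)) : Set (lp (fun _ : ℕ => ℂ) 2)))
    (hHK : ∀ x ∈ K, H x ∈ K)
    (hHtK : ∀ x ∈ K, H (S x) ∈ K) :
    K = closure (Set.range H) ∧
    closure ((Submodule.span ℂ
        (Set.range fun n : ℕ => (fun x => H (S (H (S x))))^[n] u) :
          Submodule ℂ (lp (fun _ : ℕ => ℂ) 2)) : Set (lp (fun _ : ℕ => ℂ) 2))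
      = closure (Set.range H) := by
  have hS : IsUnilateralShift S := ⟨hS0, hSsucc⟩
  obtain rfl : Sstar = ContinuousLinearMap.adjoint S := hS.eq_adjoint hSstar
  obtain rfl : C = star := funext fun x => lp.ext (funext (hC x))
  obtain rfl : H = compConj Γ := funext hH
  obtain rfl : e0 = lp.single 2 0 1 := eq_lp_single_one he0 he0'
  subst hu hK
  have key := simple_spectrum_of_invariant_cyclic_subspace_general
    (hS.semiconj_compConj hHankel) hS.dense_cyclicSubspace hS.map_adjoint rfl hHK hHtK
  exact ⟨congrArg SetLike.coe key.1, congrArg SetLike.coe key.2⟩
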